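/- arXiv:1712.08678 — 3 statements merged into one kernel-verified Lean document; each statement's English description precedes it below -/
import Mathlib

section
/- For the ferromagnetic Ising–Kac model (pair potential k_γ ≥ 0), for every β > 0, every external field b ≥ 0, and all sites x, y ∈ Λ_N, the spin covariance is decreased by the external field: E^γ_{β,b}[σ_x σ_y] − E^γ_{β,b}[σ_x] E^γ_{β,b}[σ_y] ≤ E^γ_{β,0}[σ_x σ_y] − E^γ_{β,0}[σ_x] E^γ_{β,0}[σ_y]. -/
open scoped BigOperators ENNReal
open MeasureTheory

noncomputable section

namespace IsingKac

/-- The periodic lattice `Λ_N = {1-N, …, N}²`, realised as `(ℤ/2Nℤ)²`. -/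
abbrev Lat (N : ℕ) : Type := ZMod (2*N) × ZMod (2*N)

instance latNeZero (N : ℕ) [NeZero N] : NeZero (2*N) := ⟨by have := NeZero.ne N; omega⟩

/-- The representative of `v ∈ ℤ/2Nℤ` lying in `{1-N, …, N}`. -/
def latRep (N : ℕ) (v : ZMod (2*N)) : ℤ :=
  if (v.val : ℤ) ≤ (N : ℤ) then (v.val : ℤ) else (v.val : ℤ) - 2*N

def latRep2 (N : ℕ) (z : Lat N) : ℤ × ℤ := (latRep N z.1, latRep N z.2)

/-- The character `e_w(x) = exp(iπ w·x)`. -/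
def eW (w : ℤ × ℤ) (x : ℝ × ℝ) : ℂ :=
  Complex.exp ((Real.pi : ℂ) * Complex.I * ((w.1 : ℂ) * (x.1 : ℂ) + (w.2 : ℂ) * (x.2 : ℂ)))

/-- The point `ε z ∈ Λ_ε ⊂ 𝕋²` corresponding to `z ∈ Λ_N` (with `ε = 1/N`). -/
def latPt (N : ℕ) (z : Lat N) : ℝ × ℝ :=
  ((latRep N z.1 : ℝ) / N, (latRep N z.2 : ℝ) / N)

/-- Discrete Fourier coefficient `f̂(w) = Σ_{x ∈ Λ_ε} ε² f(x) e^{-iπ w·x}`. -/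
def dFT (N : ℕ) [NeZero N] (f : Lat N → ℂ) (w : ℤ × ℤ) : ℂ :=
  ∑ z : Lat N, ((N : ℂ)^2)⁻¹ * f z * (starRingEnd ℂ) (eW w (latPt N z))

/-- The extension operator `(Ex f)(x) = (1/4) Σ_{w ∈ Λ_N} f̂(w) e^{iπ w·x}` for `x ∈ 𝕋²`. -/
def Ex (N : ℕ) [NeZero N] (f : Lat N → ℂ) (x : ℝ × ℝ) : ℂ :=
  (1/4 : ℂ) * ∑ z : Lat N, dFT N f (latRep2 N z) * eW (latRep2 N z) x

/-- Discrete `L^p` norm on `Λ_ε`, `p ∈ [1,∞]`. -/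
def dLp (N : ℕ) [NeZero N] (p : ℝ≥0∞) {E : Type*} [NormedAddCommGroup E]
    (f : Lat N → E) : ℝ :=
  if p = ∞ then ⨆ z : Lat N, ‖f z‖
  else (∑ z : Lat N, ((N : ℝ)^2)⁻¹ * ‖f z‖ ^ p.toReal) ^ (1/p.toReal)

/-- Fundamental domain of the torus `𝕋² = [-1,1]²`. -/
def box : Set (ℝ × ℝ) := Set.Icc (-1 : ℝ) 1 ×ˢ Set.Icc (-1 : ℝ) 1

/-- `L^p(𝕋²)` norm, `p ∈ [1,∞]`. -/
def cLp (p : ℝ≥0∞) {E : Type*} [NormedAddCommGroup E] (g : ℝ × ℝ → E) : ℝ≥0∞ :=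
  eLpNorm g p (volume.restrict box)

/-- Euclidean norm on `ℝ²`. -/
def enorm2 (r : ℝ × ℝ) : ℝ := Real.sqrt (r.1^2 + r.2^2)

/-- A Littlewood–Paley partition of unity `(χ̃, χ)` on `ℝ²`. -/
structure LPpartition : Type where
  chit : ℝ × ℝ → ℝ
  chi : ℝ × ℝ → ℝ
  cont_t : Continuous chit
  cont : Continuous chi
  mem_t : ∀ r, chit r ∈ Set.Icc (0:ℝ) 1
  mem : ∀ r, chi r ∈ Set.Icc (0:ℝ) 1
  supp_t : ∀ r : ℝ × ℝ, 4/3 < enorm2 r → chit r = 0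
  supp : ∀ r : ℝ × ℝ, enorm2 r < 3/4 ∨ 8/3 < enorm2 r → chi r = 0
  partition : ∀ r : ℝ × ℝ, chit r + ∑' k : ℕ, chi ((2:ℝ)^(-(k:ℤ)) • r) = 1

/-- `χ_k`, for `k ≥ -1`. -/
def LPchi (P : LPpartition) (k : ℤ) : ℝ × ℝ → ℝ :=
  if k = -1 then P.chit else fun r => P.chi ((2:ℝ)^(-k) • r)

/-- The Littlewood–Paley block `δ_k (Ex f)` of (the extension of) a lattice function. -/
def dBlock (N : ℕ) [NeZero N] (P : LPpartition) (k : ℤ) (f : Lat N → ℂ) (x : ℝ × ℝ) : ℂ :=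
  (1/4 : ℂ) * ∑ z : Lat N,
    ((LPchi P k ((latRep N z.1 : ℝ), (latRep N z.2 : ℝ)) : ℝ) : ℂ) *
      dFT N f (latRep2 N z) * eW (latRep2 N z) x

/-- Discrete Besov norm `‖f‖_{B^ν_{p,q}(Λ_ε)}`. -/
def dBesov (N : ℕ) [NeZero N] (P : LPpartition) (ν : ℝ) (p q : ℝ≥0∞) (f : Lat N → ℂ) : ℝ :=
  if q = ∞ then
    ⨆ k : ℕ, (2:ℝ)^(ν * ((k:ℝ) - 1)) * dLp N p (fun z => dBlock N P ((k:ℤ)-1) f (latPt N z))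
  else
    (∑' k : ℕ, ((2:ℝ)^(ν * ((k:ℝ) - 1)) *
      dLp N p (fun z => dBlock N P ((k:ℤ)-1) f (latPt N z))) ^ q.toReal) ^ (1/q.toReal)

/-- The `C^{-ν}` (Besov–Hölder) norm of the extension `Ex f`:
`sup_{k ≥ -1} 2^{-νk} ‖δ_k (Ex f)‖_{L^∞(𝕋²)}`. -/
def holderNeg (N : ℕ) [NeZero N] (P : LPpartition) (ν : ℝ) (f : Lat N → ℂ) : ℝ :=
  ⨆ k : ℕ, (2:ℝ)^(-ν * ((k:ℝ) - 1)) * ⨆ x : ℝ × ℝ, ‖dBlock N P ((k:ℤ)-1) f x‖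

/-- Spin values. -/
def spin (s : Bool) : ℝ := if s then 1 else -1

/-- Hamiltonian `H(σ) = (β/2) Σ_{x,y} k(x-y) σ_x σ_y + b Σ_x σ_x`. -/
def hamil (N : ℕ) [NeZero N] (kk : Lat N → ℝ) (β b : ℝ) (σ : Lat N → ℝ) : ℝ :=
  β/2 * ∑ x : Lat N, ∑ y : Lat N, kk (x - y) * σ x * σ y + b * ∑ x : Lat N, σ x

/-- Gibbs expectation `E^γ_{β,b}[F]`. -/
def gibbsE (N : ℕ) [NeZero N] (kk : Lat N → ℝ) (β b : ℝ) (F : (Lat N → ℝ) → ℝ) : ℝ :=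
  (∑ s : Lat N → Bool, Real.exp (hamil N kk β b (fun x => spin (s x))) * F (fun x => spin (s x))) /
  (∑ s : Lat N → Bool, Real.exp (hamil N kk β b (fun x => spin (s x))))

/-- The profile `𝔎 : ℝ² → [0,1]`, twice differentiable, radial, supported in `B(0,3)`,
not identically zero. -/
structure KacProfile : Type where
  f : ℝ × ℝ → ℝ
  smooth : ContDiff ℝ 2 f
  mem : ∀ x, f x ∈ Set.Icc (0:ℝ) 1
  radial : ∀ x y : ℝ × ℝ, enorm2 x = enorm2 y → f x = f y
  supp : ∀ x : ℝ × ℝ, 3 < enorm2 x → f x = 0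
  nontriv : ∃ x, f x ≠ 0

/-- The Kac kernel `k_γ(z) = c γ² 𝔎(γ·z)` (shortest periodic representative), `k_γ(0)=0`. -/
def kGamma (𝔎 : KacProfile) (N : ℕ) (c γ : ℝ) (z : Lat N) : ℝ :=
  if z = 0 then 0 else c * γ^2 * 𝔎.f (γ * (latRep N z.1 : ℝ), γ * (latRep N z.2 : ℝ))

/-- `γ = N^{-1/2}`, so that `γ² = ε = 1/N`. -/
def gam (N : ℕ) : ℝ := Real.sqrt ((N : ℝ)⁻¹)

/-- Fourier transform `K̂_γ(ω) = Σ_z k_γ(z) e^{-iπ ω·(εz)}` of the macroscopic kernel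
(real, since the kernel is even). -/
def kHat (N : ℕ) [NeZero N] (kk : Lat N → ℝ) (ω : ℤ × ℤ) : ℝ :=
  ∑ z : Lat N, kk z *
    Real.cos (Real.pi * ((ω.1 : ℝ) * (latRep N z.1 : ℝ) / N + (ω.2 : ℝ) * (latRep N z.2 : ℝ) / N))

/-- The renormalisation constant
`𝔠_γ = (1/4) Σ_{ω ∈ Λ_N \ {0}} |K̂_γ(ω)|² / (γ^{-2} (1-K̂_γ(ω)))`. -/
def cGamma (N : ℕ) [NeZero N] (kk : Lat N → ℝ) (γ : ℝ) : ℝ :=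
  (1/4) * ∑ z : Lat N, if z = (0 : Lat N) then 0 else
    (kHat N kk (latRep2 N z))^2 / ((γ^2)⁻¹ * (1 - kHat N kk (latRep2 N z)))

/-- Critical inverse temperature `β = 1 + γ²(𝔠_γ + A)`. -/
def betaCrit (𝔎 : KacProfile) (N : ℕ) [NeZero N] (c A : ℝ) : ℝ :=
  1 + (gam N)^2 * (cGamma N (kGamma 𝔎 N c (gam N)) (gam N) + A)

/-- The fluctuation field `X_γ(x) = γ^{-1} Σ_z k_γ(ε^{-1}x - z) σ_z`, as a function on `Λ_N`. -/
def fluct (N : ℕ) [NeZero N] (kk : Lat N → ℝ) (γ : ℝ) (σ : Lat N → ℝ) (z : Lat N) : ℝ :=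
  γ⁻¹ * ∑ y : Lat N, kk (z - y) * σ y

/-- The rescaled step field `γ^{-1} σ_{⌊ε^{-1}x⌋}` on the torus (without the `γ^{-1}`). -/
def stepField (N : ℕ) (σ : Lat N → ℝ) (x : ℝ × ℝ) : ℝ :=
  σ (((⌊(N : ℝ) * x.1⌋ : ℤ) : ZMod (2*N)), ((⌊(N : ℝ) * x.2⌋ : ℤ) : ZMod (2*N)))

/-- Fourier coefficient on the torus: `ĝ(ω) = ∫_{𝕋²} g(x) e^{-iπω·x} dx`. -/
def cFT (g : ℝ × ℝ → ℂ) (ω : ℤ × ℤ) : ℂ :=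
  ∫ x in box, g x * (starRingEnd ℂ) (eW ω x)


/-! ### Additional definitions -/

/-- Nearest-neighbour Dirichlet sum `Σ_{x,y ∈ Λ_ε, |x-y|=ε} ε² (f(y)-f(x))²`. -/
def nnSum (N : ℕ) [NeZero N] (f : Lat N → ℝ) : ℝ :=
  ∑ x : Lat N, ((N : ℝ)^2)⁻¹ *
    ((f (x + (1, 0)) - f x)^2 + (f (x + (0, 1)) - f x)^2 +
     (f (x - (1, 0)) - f x)^2 + (f (x - (0, 1)) - f x)^2)

/-- The `d`-dimensional periodic lattice `Λ_N^d`. -/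
abbrev LatD (d N : ℕ) : Type := Fin d → ZMod (2*N)

/-- Discrete `L^p` norm on `Λ_ε^d`, `p ∈ [1,∞]`. -/
def dLpD (d N : ℕ) [NeZero N] (p : ℝ≥0∞) (f : LatD d N → ℂ) : ℝ :=
  if p = ∞ then ⨆ z : LatD d N, ‖f z‖
  else (∑ z : LatD d N, ((N : ℝ)^d)⁻¹ * ‖f z‖ ^ p.toReal) ^ (1/p.toReal)

/-- `Σ_{w ∈ Λ_N^d} χ(λ w) e_w`, evaluated at the lattice point `ε z ∈ Λ_ε^d`. -/
def gLam (d N : ℕ) [NeZero N] (χ : (Fin d → ℝ) → ℝ) (lam : ℝ) (z : LatD d N) : ℂ :=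
  ∑ w : LatD d N, ((χ (fun i => lam * (latRep N (w i) : ℝ)) : ℝ) : ℂ) *
    Complex.exp ((Real.pi : ℂ) * Complex.I *
      ((∑ i : Fin d, (latRep N (w i) : ℝ) * ((latRep N (z i) : ℝ) / N) : ℝ) : ℂ))

/-- Second partial derivative of `φ` in directions `v, w`. -/
def pd2 (φ : ℝ × ℝ → ℝ) (v w : ℝ × ℝ) : ℝ × ℝ → ℝ :=
  fun x => fderiv ℝ (fun y => fderiv ℝ φ y v) x w

/-- `max_{i,j ∈ {1,2}} ‖∂_i ∂_j φ‖_{L^∞}`. -/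
def secondDerivBound (φ : ℝ × ℝ → ℝ) : ℝ :=
  max (max (⨆ x : ℝ × ℝ, |pd2 φ (1,0) (1,0) x|) (⨆ x : ℝ × ℝ, |pd2 φ (1,0) (0,1) x|))
      (max (⨆ x : ℝ × ℝ, |pd2 φ (0,1) (1,0) x|) (⨆ x : ℝ × ℝ, |pd2 φ (0,1) (0,1) x|))

/-- The Littlewood–Paley block `δ_k g` of a function on the torus. -/
def cBlock (P : LPpartition) (k : ℤ) (g : ℝ × ℝ → ℂ) (x : ℝ × ℝ) : ℂ :=
  (1/4 : ℂ) * ∑' ω : ℤ × ℤ, ((LPchi P k ((ω.1 : ℝ), (ω.2 : ℝ)) : ℝ) : ℂ) * cFT g ω * eW ω x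

/-- Besov norm `‖g‖_{B^ν_{1,1}(𝕋²)} = Σ_{k ≥ -1} 2^{νk} ‖δ_k g‖_{L¹(𝕋²)}`. -/
def cBesov11 (P : LPpartition) (ν : ℝ) (g : ℝ × ℝ → ℂ) : ℝ :=
  ∑' k : ℕ, (2:ℝ) ^ (ν * ((k:ℝ) - 1)) * ∫ x in box, ‖cBlock P ((k:ℤ)-1) g x‖

open scoped NNReal

/-!
Ellis and Monroe's proof of the GHS inequality. Take four independent copies of the system, two in
the field `h` and two in the field `h'`, and rotate the four spins at each site by an orthogonal
matrix. Orthogonality keeps the interaction a ferromagnetic sum of products of rotated spins, and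
since `|h'| ≤ h` the field term also has nonnegative coefficients. Expanding the exponential, every
expectation of a polynomial with nonnegative coefficients in the rotated spins is thus a nonnegative
combination of products of single-site averages of monomials. By the symmetries of the four spins
such an average vanishes unless all exponents have the same parity, and then the monomial is
pointwise nonnegative because the product of the four rotated spins is a square. The difference of
the two covariances is, up to a positive factor, the expectation of such a polynomial.
-/

section NonnegSums

lemma sum_nonneg_of_mem_adjoin {Ω : Type*} [Fintype Ω] {A : Set (Ω → ℝ)}
    (hA : ∀ F ∈ Submonoid.closure A, 0 ≤ ∑ ω, F ω) {F : Ω → ℝ}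
    (hF : F ∈ Algebra.adjoin ℝ≥0 A) : 0 ≤ ∑ ω, F ω := by
  rw [← Subalgebra.mem_toSubmodule, Algebra.adjoin_eq_span] at hF
  induction hF using Submodule.span_induction with
  | mem F hF => exact hA F hF
  | zero => simp
  | add F G _ _ hF hG => simpa only [Pi.add_apply, Finset.sum_add_distrib] using add_nonneg hF hG
  | smul c F _ hF =>
    simpa only [Pi.smul_apply, NNReal.smul_def, smul_eq_mul, ← Finset.mul_sum] using
      mul_nonneg c.coe_nonneg hF

lemma sum_mul_exp_nonneg {Ω : Type*} [Fintype Ω] {S : Subalgebra ℝ≥0 (Ω → ℝ)}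
    (hS : ∀ F ∈ S, 0 ≤ ∑ ω, F ω) {F G : Ω → ℝ} (hF : F ∈ S) (hG : G ∈ S) :
    0 ≤ ∑ ω, G ω * Real.exp (F ω) := by
  have expansion : HasSum (fun n : ℕ => ∑ ω, G ω * (F ω ^ n / n.factorial))
      (∑ ω, G ω * Real.exp (F ω)) :=
    hasSum_sum fun ω _ => by
      simpa only [Real.exp_eq_exp_ℝ] using
        (NormedSpace.expSeries_div_hasSum_exp (F ω)).mul_left (G ω)
  refine expansion.nonneg fun n => ?_
  have term_nonneg := hS _ (S.smul_mem (S.mul_mem hG (S.pow_mem hF n)) (n.factorial : ℝ≥0)⁻¹)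
  refine term_nonneg.trans_eq (Finset.sum_congr rfl fun ω _ => ?_)
  simp only [Pi.smul_apply, Pi.mul_apply, Pi.pow_apply, NNReal.smul_def, NNReal.coe_inv,
    NNReal.coe_natCast, smul_eq_mul]
  ring

lemma const_mul_mem_subalgebra {Ω : Type*} {S : Subalgebra ℝ≥0 (Ω → ℝ)} {c : ℝ} (hc : 0 ≤ c)
    {F : Ω → ℝ} (hF : F ∈ S) : (fun ω => c * F ω) ∈ S :=
  S.smul_mem hF ⟨c, hc⟩

lemma fun_sum_mem_subalgebra {Ω α : Type*} {S : Subalgebra ℝ≥0 (Ω → ℝ)} {t : Finset α}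
    {F : α → Ω → ℝ} (hF : ∀ a ∈ t, F a ∈ S) : (fun ω => ∑ a ∈ t, F a ω) ∈ S := by
  simpa only [← Finset.sum_fn] using S.sum_mem hF

/-- The polynomials with nonnegative coefficients in the variables `s ↦ g k (s x)`, where `x` runs
through the sites and `k` indexes the single-site functions `g k`. -/
def sitePolynomials (ι : Type*) {κ E : Type*} (g : κ → E → ℝ) : Subalgebra ℝ≥0 ((ι → E) → ℝ) :=
  Algebra.adjoin ℝ≥0 (Set.range fun (p : ι × κ) (s : ι → E) => g p.2 (s p.1))

variable {ι κ E : Type*}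

lemma site_mem_sitePolynomials (g : κ → E → ℝ) (k : κ) (x : ι) :
    (fun s : ι → E => g k (s x)) ∈ sitePolynomials ι g :=
  Algebra.subset_adjoin ⟨(x, k), rfl⟩

lemma sum_nonneg_of_mem_sitePolynomials [Fintype ι] [DecidableEq ι] [Fintype κ] [Fintype E]
    {g : κ → E → ℝ} (hg : ∀ e : κ → ℕ, 0 ≤ ∑ v, ∏ k, g k v ^ e k) {F : (ι → E) → ℝ}
    (hF : F ∈ sitePolynomials ι g) : 0 ≤ ∑ s, F s := by
  refine sum_nonneg_of_mem_adjoin (fun M hM => ?_) hF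
  obtain ⟨e, rfl⟩ := Submonoid.exists_of_mem_closure_range _ _ hM
  calc 0 ≤ ∏ x, ∑ v, ∏ k, g k v ^ e (x, k) := Finset.prod_nonneg fun x _ => hg _
    _ = ∑ s : ι → E, ∏ x, ∏ k, g k (s x) ^ e (x, k) := Fintype.prod_sum _
    _ = _ := by simp only [Finset.prod_apply, Pi.pow_apply, Fintype.prod_prod_type]

end NonnegSums

section EllisMonroe

/-- The spins of four copies of the system at one site, grouped in two pairs. -/
abbrev SpinQuad : Type := (Bool × Bool) × (Bool × Bool)

/-- The image of the spins of four copies under an orthogonal matrix. The first two rows are the sum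
and difference of the pair sums, the last two the sum and difference of the pair differences. -/
def rotatedSpin (i : Fin 4) (q : SpinQuad) : ℝ :=
  ![(spin q.1.1 + spin q.1.2 + spin q.2.1 + spin q.2.2) / 2,
    (spin q.1.1 + spin q.1.2 - spin q.2.1 - spin q.2.2) / 2,
    (spin q.2.1 - spin q.2.2 + spin q.1.1 - spin q.1.2) / 2,
    (spin q.2.1 - spin q.2.2 - spin q.1.1 + spin q.1.2) / 2] i

lemma spin_sq (a : Bool) : spin a ^ 2 = 1 := by cases a <;> simp [spin]

lemma spin_not (a : Bool) : spin (!a) = -spin a := by cases a <;> simp [spin]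

lemma sum_rotatedSpin_mul_rotatedSpin (p q : SpinQuad) :
    ∑ i, rotatedSpin i p * rotatedSpin i q =
      spin p.1.1 * spin q.1.1 + spin p.1.2 * spin q.1.2 +
        spin p.2.1 * spin q.2.1 + spin p.2.2 * spin q.2.2 := by
  simp only [Fin.sum_univ_four, rotatedSpin, Matrix.cons_val]
  ring

lemma prod_rotatedSpin_nonneg (q : SpinQuad) : 0 ≤ ∏ i, rotatedSpin i q := by
  obtain ⟨⟨a, b⟩, c, d⟩ := q
  have pair_sums : rotatedSpin 0 ((a, b), c, d) * rotatedSpin 1 ((a, b), c, d) =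
      (spin a * spin b - spin c * spin d) / 2 := by
    simp only [rotatedSpin, Matrix.cons_val]
    linear_combination (spin_sq a + spin_sq b - spin_sq c - spin_sq d) / 4
  have pair_differences : rotatedSpin 2 ((a, b), c, d) * rotatedSpin 3 ((a, b), c, d) =
      (spin a * spin b - spin c * spin d) / 2 := by
    simp only [rotatedSpin, Matrix.cons_val]
    linear_combination (spin_sq c + spin_sq d - spin_sq a - spin_sq b) / 4
  rw [Fin.prod_univ_four, pair_sums, mul_assoc, pair_differences]
  exact mul_self_nonneg _

lemma sum_prod_pow_eq_zero_of_symm {R κ E : Type*} [CommRing R] [IsDomain R] [Fintype κ]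
    [Fintype E] {g : κ → E → R} {e : κ → ℕ} (T : E ≃ E) (ε : κ → R)
    (hT : ∀ k v, g k (T v) = ε k * g k v) (hε : ∏ k, ε k ^ e k ≠ 1) :
    ∑ v, ∏ k, g k v ^ e k = 0 := by
  have invariance : ∑ v, ∏ k, g k v ^ e k = (∏ k, ε k ^ e k) * ∑ v, ∏ k, g k v ^ e k := by
    conv_lhs => rw [← T.sum_comp]
    simp only [hT, mul_pow, Finset.prod_mul_distrib, Finset.mul_sum]
  exact (mul_left_eq_self₀.mp invariance.symm).resolve_left hε

lemma forall_even_or_forall_odd_of_sum_rotatedSpin_ne_zero {e : Fin 4 → ℕ}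
    (he : ∑ q, ∏ i, rotatedSpin i q ^ e i ≠ 0) : (∀ i, Even (e i)) ∨ ∀ i, Odd (e i) := by
  have sign_eq_one (T : SpinQuad ≃ SpinQuad) (ε : Fin 4 → ℝ)
      (hT : ∀ i q, rotatedSpin i (T q) = ε i * rotatedSpin i q) : ∏ i, ε i ^ e i = 1 :=
    not_not.mp fun hε => he (sum_prod_pow_eq_zero_of_symm T ε hT hε)
  have swap_in_pairs := sign_eq_one ((Equiv.prodComm _ _).prodCongr (Equiv.prodComm _ _))
    ![1, 1, -1, -1] fun i q => by
      fin_cases i <;>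
        simp only [rotatedSpin, Equiv.prodCongr_apply, Prod.map, Equiv.prodComm_apply,
          Prod.fst_swap, Prod.snd_swap, Fin.zero_eta, Fin.mk_one, Fin.reduceFinMk,
          Matrix.cons_val] <;>
        ring
  have swap_pairs := sign_eq_one (Equiv.prodComm _ _) ![1, -1, 1, -1] fun i q => by
    fin_cases i <;>
      simp only [rotatedSpin, Equiv.prodComm_apply, Prod.fst_swap, Prod.snd_swap, Fin.zero_eta,
        Fin.mk_one, Fin.reduceFinMk, Matrix.cons_val] <;>
      ring
  have flip_all := sign_eq_one
    ((Equiv.boolNot.prodCongr Equiv.boolNot).prodCongr (Equiv.boolNot.prodCongr Equiv.boolNot))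
    (fun _ => -1) fun i q => by
      fin_cases i <;>
        simp only [rotatedSpin, spin_not, Equiv.prodCongr_apply, Prod.map, Equiv.boolNot_apply,
          Fin.zero_eta, Fin.mk_one, Fin.reduceFinMk, Matrix.cons_val] <;>
        ring
  simp only [Fin.prod_univ_four, Matrix.cons_val, one_pow, one_mul, mul_one, ← pow_add,
    neg_one_pow_eq_one_iff_even (show (-1 : ℝ) ≠ 1 by norm_num)]
    at swap_in_pairs swap_pairs flip_all
  simp only [Fin.forall_fin_succ]
  grind

theorem sum_prod_rotatedSpin_pow_nonneg (e : Fin 4 → ℕ) :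
    0 ≤ ∑ q, ∏ i, rotatedSpin i q ^ e i := by
  by_cases hzero : ∑ q, ∏ i, rotatedSpin i q ^ e i = 0
  · exact hzero.ge
  refine Finset.sum_nonneg fun q _ => ?_
  rcases forall_even_or_forall_odd_of_sum_rotatedSpin_ne_zero hzero with heven | hodd
  · exact Finset.prod_nonneg fun i _ => (heven i).pow_nonneg _
  · choose m hm using hodd
    simp only [hm, pow_succ, Finset.prod_mul_distrib]
    exact mul_nonneg (Finset.prod_nonneg fun i _ => (even_two_mul (m i)).pow_nonneg _)
      (prod_rotatedSpin_nonneg q)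

end EllisMonroe

section Covariance

variable {Ω : Type*} [Fintype Ω]

/-- The covariance of `F` and `G` under the probability measure proportional to the weight `w`. -/
def weightedCov (w F G : Ω → ℝ) : ℝ :=
  Finset.univ.centerMass w (fun a => F a * G a) -
    Finset.univ.centerMass w F * Finset.univ.centerMass w G

lemma sum_pairs_mul_sub_mul_sub {w : Ω → ℝ} (hw : ∑ a, w a ≠ 0) (F G : Ω → ℝ) :
    ∑ p : Ω × Ω, w p.1 * w p.2 * ((F p.1 - F p.2) * (G p.1 - G p.2)) =
      2 * (∑ a, w a) ^ 2 * weightedCov w F G := by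
  have expand : ∑ p : Ω × Ω, w p.1 * w p.2 * ((F p.1 - F p.2) * (G p.1 - G p.2)) =
      2 * ((∑ a, w a) * (∑ a, w a * (F a * G a)) - (∑ a, w a * F a) * ∑ a, w a * G a) := by
    have pointwise (a b : Ω) : w a * w b * ((F a - F b) * (G a - G b)) =
        w a * (F a * G a) * w b + w a * (w b * (F b * G b)) -
          w a * F a * (w b * G b) - w a * G a * (w b * F b) := by ring
    simp only [Fintype.sum_prod_type, pointwise, Finset.sum_add_distrib, Finset.sum_sub_distrib,
      ← Fintype.sum_mul_sum]
    ring
  rw [expand]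
  simp only [weightedCov, Finset.centerMass, smul_eq_mul]
  field_simp

lemma sum_quadruples_eq_weightedCov_sub {w w' : Ω → ℝ} (hw : ∑ a, w a ≠ 0)
    (hw' : ∑ a, w' a ≠ 0) (F G : Ω → ℝ) :
    ∑ p : (Ω × Ω) × (Ω × Ω), w p.1.1 * w p.1.2 * (w' p.2.1 * w' p.2.2) *
        ((F p.2.1 - F p.2.2) * (G p.2.1 - G p.2.2) -
          (F p.1.1 - F p.1.2) * (G p.1.1 - G p.1.2)) =
      2 * (∑ a, w a) ^ 2 * (∑ a, w' a) ^ 2 * (weightedCov w' F G - weightedCov w F G) := by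
  have sum_weight_pairs (v : Ω → ℝ) : ∑ p : Ω × Ω, v p.1 * v p.2 = (∑ a, v a) ^ 2 := by
    rw [sq, Fintype.sum_mul_sum, Fintype.sum_prod_type]
  have factor : ∑ p : (Ω × Ω) × (Ω × Ω), w p.1.1 * w p.1.2 * (w' p.2.1 * w' p.2.2) *
        ((F p.2.1 - F p.2.2) * (G p.2.1 - G p.2.2) - (F p.1.1 - F p.1.2) * (G p.1.1 - G p.1.2)) =
      (∑ p : Ω × Ω, w p.1 * w p.2) *
          (∑ p : Ω × Ω, w' p.1 * w' p.2 * ((F p.1 - F p.2) * (G p.1 - G p.2))) -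
        (∑ p : Ω × Ω, w p.1 * w p.2 * ((F p.1 - F p.2) * (G p.1 - G p.2))) *
          ∑ p : Ω × Ω, w' p.1 * w' p.2 := by
    rw [Fintype.sum_prod_type, Fintype.sum_mul_sum, Fintype.sum_mul_sum,
      ← Finset.sum_sub_distrib]
    simp only [← Finset.sum_sub_distrib]
    exact Fintype.sum_congr _ _ fun p => Fintype.sum_congr _ _ fun q => by ring
  rw [factor, sum_weight_pairs, sum_weight_pairs, sum_pairs_mul_sub_mul_sub hw,
    sum_pairs_mul_sub_mul_sub hw']
  ring

end Covariance

section Ising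

variable {ι : Type*} [Fintype ι]

/-- The exponent `∑ J_{xy} σ_x σ_y + ∑ h_x σ_x` of the Ising model on a finite set of sites. -/
def isingExponent (J : ι → ι → ℝ) (h : ι → ℝ) (s : ι → Bool) : ℝ :=
  ∑ x, ∑ y, J x y * (spin (s x) * spin (s y)) + ∑ x, h x * spin (s x)

/-- The unnormalised Gibbs weight of the Ising model with couplings `J` and fields `h`. -/
def isingWeight (J : ι → ι → ℝ) (h : ι → ℝ) (s : ι → Bool) : ℝ :=
  Real.exp (isingExponent J h s)

lemma sum_isingWeight_pos [DecidableEq ι] (J : ι → ι → ℝ) (h : ι → ℝ) :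
    0 < ∑ s, isingWeight J h s :=
  Finset.sum_pos (fun _ _ => Real.exp_pos _) Finset.univ_nonempty

/-- The four spin configurations making up a configuration of quadruples. -/
def splitCopies (ι : Type*) :
    (ι → SpinQuad) ≃ ((ι → Bool) × (ι → Bool)) × ((ι → Bool) × (ι → Bool)) :=
  (Equiv.arrowProdEquivProdArrow ι _ _).trans
    ((Equiv.arrowProdEquivProdArrow ι _ _).prodCongr (Equiv.arrowProdEquivProdArrow ι _ _))

/-- The exponent of four independent copies with couplings `J`, the first pair in the field `h` and
the second in `h'`, in terms of rotated spins. -/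
def rotatedExponent (J : ι → ι → ℝ) (h h' : ι → ℝ) (s : ι → SpinQuad) : ℝ :=
  ∑ x, ∑ y, J x y * ∑ i, rotatedSpin i (s x) * rotatedSpin i (s y) +
    ∑ x, ((h x + h' x) * rotatedSpin 0 (s x) + (h x - h' x) * rotatedSpin 1 (s x))

lemma prod_isingWeight_splitCopies (J : ι → ι → ℝ) (h h' : ι → ℝ) (s : ι → SpinQuad) :
    isingWeight J h (splitCopies ι s).1.1 * isingWeight J h (splitCopies ι s).1.2 *
        (isingWeight J h' (splitCopies ι s).2.1 * isingWeight J h' (splitCopies ι s).2.2) =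
      Real.exp (rotatedExponent J h h' s) := by
  have field (x : ι) :
      (h x + h' x) * rotatedSpin 0 (s x) + (h x - h' x) * rotatedSpin 1 (s x) =
        h x * spin (s x).1.1 + h x * spin (s x).1.2 +
          (h' x * spin (s x).2.1 + h' x * spin (s x).2.2) := by
    simp only [rotatedSpin, Matrix.cons_val]
    ring
  simp only [isingWeight, ← Real.exp_add, isingExponent, rotatedExponent, field,
    sum_rotatedSpin_mul_rotatedSpin, mul_add, Finset.sum_add_distrib]
  congr 1
  simp only [splitCopies, Equiv.trans_apply, Equiv.prodCongr_apply, Prod.map,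
    Equiv.arrowProdEquivProdArrow_apply]
  ring

lemma rotatedExponent_mem_sitePolynomials {J : ι → ι → ℝ} (hJ : ∀ x y, 0 ≤ J x y) {h h' : ι → ℝ}
    (hh : ∀ x, |h' x| ≤ h x) : rotatedExponent J h h' ∈ sitePolynomials ι rotatedSpin := by
  have rotated_mem := site_mem_sitePolynomials (ι := ι) rotatedSpin
  have interaction_mem (x y : ι) : (fun s : ι → SpinQuad =>
      J x y * ∑ i, rotatedSpin i (s x) * rotatedSpin i (s y)) ∈ sitePolynomials ι rotatedSpin :=
    const_mul_mem_subalgebra (hJ x y) <|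
      fun_sum_mem_subalgebra fun i _ => mul_mem (rotated_mem i x) (rotated_mem i y)
  have field_mem (x : ι) : (fun s : ι → SpinQuad =>
      (h x + h' x) * rotatedSpin 0 (s x) + (h x - h' x) * rotatedSpin 1 (s x)) ∈
        sitePolynomials ι rotatedSpin := by
    obtain ⟨hneg, hle⟩ := abs_le.mp (hh x)
    exact add_mem (const_mul_mem_subalgebra (by linarith) (rotated_mem 0 x))
      (const_mul_mem_subalgebra (by linarith) (rotated_mem 1 x))
  exact add_mem
    (fun_sum_mem_subalgebra fun x _ => fun_sum_mem_subalgebra fun y _ => interaction_mem x y)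
    (fun_sum_mem_subalgebra fun x _ => field_mem x)

lemma two_mul_rotatedSpin_cross (p q : SpinQuad) :
    2 * (rotatedSpin 2 p * rotatedSpin 3 q + rotatedSpin 3 p * rotatedSpin 2 q) =
      (spin p.2.1 - spin p.2.2) * (spin q.2.1 - spin q.2.2) -
        (spin p.1.1 - spin p.1.2) * (spin q.1.1 - spin q.1.2) := by
  simp only [rotatedSpin, Matrix.cons_val]
  ring

variable [DecidableEq ι]

theorem statement3_general {J : ι → ι → ℝ} (hJ : ∀ x y, 0 ≤ J x y) {h h' : ι → ℝ}
    (hh : ∀ x, |h' x| ≤ h x) (x y : ι) :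
    weightedCov (isingWeight J h) (fun s => spin (s x)) (fun s => spin (s y)) ≤
      weightedCov (isingWeight J h') (fun s => spin (s x)) (fun s => spin (s y)) := by
  have cross_mem : (fun s : ι → SpinQuad => 2 * (rotatedSpin 2 (s x) * rotatedSpin 3 (s y) +
      rotatedSpin 3 (s x) * rotatedSpin 2 (s y))) ∈ sitePolynomials ι rotatedSpin :=
    const_mul_mem_subalgebra zero_le_two <| add_mem
      (mul_mem (site_mem_sitePolynomials _ 2 x) (site_mem_sitePolynomials _ 3 y))
      (mul_mem (site_mem_sitePolynomials _ 3 x) (site_mem_sitePolynomials _ 2 y))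
  have four_copies := sum_mul_exp_nonneg
    (fun _ => sum_nonneg_of_mem_sitePolynomials sum_prod_rotatedSpin_pow_nonneg)
    (rotatedExponent_mem_sitePolynomials hJ hh) cross_mem
  have hZ := sum_isingWeight_pos J h
  have hZ' := sum_isingWeight_pos J h'
  have cov_diff := sum_quadruples_eq_weightedCov_sub hZ.ne' hZ'.ne'
    (fun s => spin (s x)) (fun s => spin (s y))
  rw [← (splitCopies ι).sum_comp] at cov_diff
  simp only [prod_isingWeight_splitCopies] at cov_diff
  simp only [two_mul_rotatedSpin_cross, mul_comm _ (Real.exp _)] at four_copies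
  exact sub_nonneg.mp (nonneg_of_mul_nonneg_right (four_copies.trans_eq cov_diff) (by positivity))

end Ising

lemma gibbsE_eq_centerMass (N : ℕ) [NeZero N] (kk : Lat N → ℝ) (β b : ℝ)
    (F : (Lat N → ℝ) → ℝ) :
    gibbsE N kk β b F =
      Finset.univ.centerMass (isingWeight (fun u v => β / 2 * kk (u - v)) fun _ => b)
        fun s => F fun x => spin (s x) := by
  have hexp (s : Lat N → Bool) : hamil N kk β b (fun x => spin (s x)) =
      isingExponent (fun u v => β / 2 * kk (u - v)) (fun _ => b) s := by
    simp only [hamil, isingExponent, Finset.mul_sum, mul_assoc]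
  simp only [gibbsE, Finset.centerMass, isingWeight, hexp, smul_eq_mul, div_eq_inv_mul]

/-- the spin covariance is decreased by a nonnegative external field
(consequence of the GHS inequality), for any ferromagnetic pair potential. -/
theorem statement3 (N : ℕ) [NeZero N] (kk : Lat N → ℝ) (hk0 : ∀ z, 0 ≤ kk z)
    (hke : ∀ z, kk (-z) = kk z) (hk1 : (∑ z : Lat N, kk z) = 1) (hkz : kk 0 = 0)
    (β b : ℝ) (hβ : 0 < β) (hb : 0 ≤ b) (x y : Lat N) :
    gibbsE N kk β b (fun σ => σ x * σ y) -
      gibbsE N kk β b (fun σ => σ x) * gibbsE N kk β b (fun σ => σ y) ≤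
    gibbsE N kk β 0 (fun σ => σ x * σ y) -
      gibbsE N kk β 0 (fun σ => σ x) * gibbsE N kk β 0 (fun σ => σ y) := by
  simpa only [gibbsE_eq_centerMass, weightedCov] using
    statement3_general (h := fun _ => b) (h' := fun _ => 0)
      (fun u v => mul_nonneg (half_pos hβ).le (hk0 (u - v))) (fun _ => abs_zero.trans_le hb) x y

end IsingKac
end
end

section
/- There exists a constant c₀ > 0 such that for all β ∈ [1,2] and all h ∈ [−1,1], one has h·tanh(βh) ≤ βh² − c₀h⁴ (equivalently, tanh(βh)/h ≤ β − c₀h² for h ≠ 0). -/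
open scoped BigOperators ENNReal
open MeasureTheory

noncomputable section

namespace IsingKac

open scoped NNReal

/-! Write `g x = x - tanh x`, an odd function with `g' = tanh² ≥ 0`. For `0 ≤ a ≤ β` monotonicity
gives `h * g (β * h) ≥ h * g (a * h)`, so only the smallest inverse temperature matters. There the
cubic lower bound `x³ / (3 cosh x) ≤ g x` applies; after multiplication by `cosh x` it says that
`x cosh x - sinh x - x³ / 3`, whose derivative is `x (sinh x - x)`, is nonnegative for `x ≥ 0`. -/

section TanhBound

open Real

theorem sq_le_self_mul_sinh (x : ℝ) : x ^ 2 ≤ x * sinh x := by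
  rw [sq]
  rcases le_total 0 x with hx | hx
  · exact mul_le_mul_of_nonneg_left (self_le_sinh_iff.2 hx) hx
  · exact mul_le_mul_of_nonpos_left (sinh_le_self_iff.2 hx) hx

theorem monotone_self_mul_cosh_sub_sinh_sub_cube :
    Monotone fun x : ℝ => x * cosh x - sinh x - x ^ 3 / 3 := by
  have hderiv (x : ℝ) :
      HasDerivAt (fun x : ℝ => x * cosh x - sinh x - x ^ 3 / 3) (x * sinh x - x ^ 2) x := by
    have h := (((hasDerivAt_id' x).mul (hasDerivAt_cosh x)).sub (hasDerivAt_sinh x)).sub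
      ((hasDerivAt_pow 3 x).div_const 3)
    exact h.congr_deriv (by norm_num)
  exact monotone_of_hasDerivAt_nonneg hderiv fun x => sub_nonneg.2 (sq_le_self_mul_sinh x)

theorem cube_div_three_mul_cosh_le_self_sub_tanh {x : ℝ} (hx : 0 ≤ x) :
    x ^ 3 / (3 * cosh x) ≤ x - tanh x := by
  have hmono : 0 ≤ x * cosh x - sinh x - x ^ 3 / 3 := by
    simpa using monotone_self_mul_cosh_sub_sinh_sub_cube hx
  calc x ^ 3 / (3 * cosh x) = x ^ 3 / 3 / cosh x := (div_div _ _ _).symm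
    _ ≤ (x * cosh x - sinh x) / cosh x := by gcongr; linarith
    _ = x - tanh x := by rw [tanh_eq_sinh_div_cosh]; field_simp

theorem hasDerivAt_tanh (x : ℝ) : HasDerivAt tanh (1 - tanh x ^ 2) x := by
  have hquot : HasDerivAt (fun y => sinh y / cosh y)
      ((cosh x * cosh x - sinh x * sinh x) / cosh x ^ 2) x :=
    (hasDerivAt_sinh x).div (hasDerivAt_cosh x) (cosh_pos x).ne'
  rw [← funext tanh_eq_sinh_div_cosh] at hquot
  refine hquot.congr_deriv ?_
  rw [tanh_eq_sinh_div_cosh]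
  field_simp

theorem monotone_self_sub_tanh : Monotone fun x : ℝ => x - tanh x := by
  have hderiv (x : ℝ) : HasDerivAt (fun x : ℝ => x - tanh x) (tanh x ^ 2) x :=
    ((hasDerivAt_id' x).sub (hasDerivAt_tanh x)).congr_deriv (sub_sub_cancel 1 _)
  exact monotone_of_hasDerivAt_nonneg hderiv fun x => sq_nonneg (tanh x)

theorem mul_tanh_mul_le {a β : ℝ} (ha : 0 ≤ a) (hβ : a ≤ β) (h : ℝ) :
    h * tanh (β * h) ≤ β * h ^ 2 - a ^ 3 / (3 * cosh (a * h)) * h ^ 4 := by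
  wlog hh : 0 ≤ h generalizing h
  · simpa only [mul_neg, neg_mul, tanh_neg, cosh_neg, neg_neg, even_two.neg_pow,
      (by decide : Even 4).neg_pow] using this (-h) (by linarith)
  have hcubic : (a * h) ^ 3 / (3 * cosh (a * h)) ≤ β * h - tanh (β * h) :=
    (cube_div_three_mul_cosh_le_self_sub_tanh (mul_nonneg ha hh)).trans
      (monotone_self_sub_tanh (mul_le_mul_of_nonneg_right hβ hh))
  calc h * tanh (β * h) = β * h ^ 2 - h * (β * h - tanh (β * h)) := by ring
    _ ≤ β * h ^ 2 - h * ((a * h) ^ 3 / (3 * cosh (a * h))) := by gcongr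
    _ = β * h ^ 2 - a ^ 3 / (3 * cosh (a * h)) * h ^ 4 := by ring

theorem statement5_general {a : ℝ} (ha : 0 < a) (M : ℝ) :
    ∃ c₀ : ℝ, 0 < c₀ ∧ ∀ β ∈ Set.Ici a, ∀ h ∈ Set.Icc (-M) M,
      h * tanh (β * h) ≤ β * h ^ 2 - c₀ * h ^ 4 := by
  refine ⟨a ^ 3 / (3 * cosh (a * M)), by positivity, ?_⟩
  intro β hβ h hh
  have habs : |a * h| ≤ |a * M| := by
    rw [abs_mul, abs_mul]
    exact mul_le_mul_of_nonneg_left ((abs_le.2 hh).trans (le_abs_self M)) (abs_nonneg a)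
  calc h * tanh (β * h) ≤ β * h ^ 2 - a ^ 3 / (3 * cosh (a * h)) * h ^ 4 :=
        mul_tanh_mul_le ha.le hβ h
    _ ≤ β * h ^ 2 - a ^ 3 / (3 * cosh (a * M)) * h ^ 4 := by
        have hcosh : cosh (a * h) ≤ cosh (a * M) := cosh_le_cosh.2 habs
        gcongr

end TanhBound

/-- `h tanh(βh) ≤ βh² - c₀ h⁴` for `β ∈ [1,2]`, `h ∈ [-1,1]`. -/
theorem statement5 :
    ∃ c₀ : ℝ, 0 < c₀ ∧ ∀ β ∈ Set.Icc (1:ℝ) 2, ∀ h ∈ Set.Icc (-1:ℝ) 1,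
      h * Real.tanh (β * h) ≤ β * h^2 - c₀ * h^4 := by
  obtain ⟨c₀, hc₀, hbound⟩ := statement5_general one_pos 1
  exact ⟨c₀, hc₀, fun β hβ => hbound β hβ.1⟩

end IsingKac
end
end

section
/- For every p ∈ [1,∞] there exists a constant C > 0 such that for every integer N ≥ 2 (with ε = 1/N) and every f: Λ_ε → ℝ, the extension satisfies ‖Ex f‖_{L^p(𝕋²)} ≤ C (log ε^{−1})² ‖f‖_{L^p(Λ_ε)}. -/
open scoped BigOperators ENNReal
open MeasureTheory

noncomputable section

namespace IsingKac

open scoped NNReal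

/-!
`Ex` is convolution over `Λ_ε` with the product of two Dirichlet kernels
`D_N(t) = ½ Σ_{1-N ≤ n ≤ N} e^{iπnt}`. Summing the geometric series gives
`|D_N(t)| ≤ (3/2) N / (1 + N|t|)` for `|t| ≤ 1`, so over any translate of the grid `ε {1-N, …, N}`
the weighted sum `ε Σ_v |D_N(t - εv)|` is at most `3 Σ_{k=1}^N 1/k ≤ 3 (1 + log N)`.
The integral of `|D_N|` over a period is the average of these sums over `t`, hence obeys the same
bound. The Schur test with both marginals of the product kernel at most `(3 (1 + log N))²`
concludes, with a constant independent of `p`.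
-/

section SchurTest

variable {X Y : Type*} [MeasurableSpace X] [MeasurableSpace Y] {μ : Measure X} {ν : Measure Y}

lemma lintegral_mul_enorm_le_rpow_mul_eLpNorm_withDensity {E : Type*} [NormedAddCommGroup E]
    {k : Y → ℝ≥0∞} (hk : AEMeasurable k ν) {g : Y → E} (hg : AEStronglyMeasurable g ν)
    {p : ℝ≥0∞} (hp : 1 ≤ p) :
    ∫⁻ y, k y * ‖g y‖ₑ ∂ν ≤
      (∫⁻ y, k y ∂ν) ^ (1 - 1 / p.toReal) * eLpNorm g p (ν.withDensity k) := by
  have hac : ν.withDensity k ≪ ν := withDensity_absolutelyContinuous ν k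
  have holder := eLpNorm_le_eLpNorm_mul_rpow_measure_univ hp (hg.mono_ac hac)
  rw [eLpNorm_one_eq_lintegral_enorm, lintegral_withDensity_eq_lintegral_mul₀ hk hg.enorm,
    withDensity_apply _ MeasurableSet.univ, Measure.restrict_univ, mul_comm] at holder
  simpa [mul_comm] using holder

lemma lintegral_mul_enorm_rpow_le {E : Type*} [NormedAddCommGroup E]
    {k : Y → ℝ≥0∞} (hk : AEMeasurable k ν) {g : Y → E} (hg : AEStronglyMeasurable g ν)
    {p : ℝ} (hp : 1 ≤ p) :
    (∫⁻ y, k y * ‖g y‖ₑ ∂ν) ^ p ≤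
      (∫⁻ y, k y ∂ν) ^ (p - 1) * ∫⁻ y, k y * ‖g y‖ₑ ^ p ∂ν := by
  have hp0 : 0 < p := one_pos.trans_le hp
  have holder := lintegral_mul_enorm_le_rpow_mul_eLpNorm_withDensity hk hg
    (ENNReal.one_le_ofReal.2 hp)
  rw [eLpNorm_eq_lintegral_rpow_enorm_toReal (by simpa using hp0) ENNReal.ofReal_ne_top,
    ENNReal.toReal_ofReal hp0.le,
    lintegral_withDensity_eq_lintegral_mul₀ hk (hg.enorm.pow_const p)] at holder
  calc (∫⁻ y, k y * ‖g y‖ₑ ∂ν) ^ p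
      ≤ ((∫⁻ y, k y ∂ν) ^ (1 - 1 / p) * (∫⁻ y, k y * ‖g y‖ₑ ^ p ∂ν) ^ (1 / p)) ^ p :=
        ENNReal.rpow_le_rpow holder hp0.le
    _ = (∫⁻ y, k y ∂ν) ^ (p - 1) * ∫⁻ y, k y * ‖g y‖ₑ ^ p ∂ν := by
        rw [ENNReal.mul_rpow_of_nonneg _ _ hp0.le, ← ENNReal.rpow_mul, ← ENNReal.rpow_mul,
          one_div_mul_cancel hp0.ne', ENNReal.rpow_one, sub_mul, one_mul,
          one_div_mul_cancel hp0.ne']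

lemma lintegral_lintegral_mul_rpow_le [SFinite μ] [SFinite ν] {E : Type*} [NormedAddCommGroup E]
    {k : X → Y → ℝ≥0∞} (hk : Measurable (Function.uncurry k)) {A B : ℝ≥0∞}
    (hA : ∀ᵐ x ∂μ, ∫⁻ y, k x y ∂ν ≤ A) (hB : ∀ᵐ y ∂ν, ∫⁻ x, k x y ∂μ ≤ B)
    {g : Y → E} (hg : AEStronglyMeasurable g ν) {p : ℝ} (hp : 1 ≤ p) :
    ∫⁻ x, (∫⁻ y, k x y * ‖g y‖ₑ ∂ν) ^ p ∂μ ≤ A ^ (p - 1) * (B * ∫⁻ y, ‖g y‖ₑ ^ p ∂ν) := by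
  have hgp : AEMeasurable (fun y => ‖g y‖ₑ ^ p) ν := hg.enorm.pow_const p
  have hkg : AEMeasurable (Function.uncurry fun x y => k x y * ‖g y‖ₑ ^ p) (μ.prod ν) :=
    hk.aemeasurable.mul hgp.comp_snd
  calc ∫⁻ x, (∫⁻ y, k x y * ‖g y‖ₑ ∂ν) ^ p ∂μ
      ≤ ∫⁻ x, A ^ (p - 1) * ∫⁻ y, k x y * ‖g y‖ₑ ^ p ∂ν ∂μ := by
        refine lintegral_mono_ae (hA.mono fun x hx => ?_)
        refine (lintegral_mul_enorm_rpow_le hk.of_uncurry_left.aemeasurable hg hp).trans ?_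
        exact mul_le_mul_left (ENNReal.rpow_le_rpow hx (by linarith)) _
    _ = A ^ (p - 1) * ∫⁻ y, (∫⁻ x, k x y ∂μ) * ‖g y‖ₑ ^ p ∂ν := by
        rw [lintegral_const_mul'' _ (by exact hkg.lintegral_prod_right'),
          lintegral_lintegral_swap hkg]
        simp_rw [lintegral_mul_const _ hk.of_uncurry_right]
    _ ≤ A ^ (p - 1) * (B * ∫⁻ y, ‖g y‖ₑ ^ p ∂ν) := by
        rw [← lintegral_const_mul'' _ hgp]
        refine mul_le_mul_right ?_ _
        exact lintegral_mono_ae (hB.mono fun y hy => mul_le_mul_left hy _)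

/- At `p = ∞` the constant is `A`, because `1 / (∞ : ℝ≥0∞).toReal = 0` as a junk value. -/
theorem eLpNorm_le_of_enorm_le_lintegral_kernel [SFinite μ] [SFinite ν] {E F : Type*}
    [NormedAddCommGroup E] [NormedAddCommGroup F]
    {k : X → Y → ℝ≥0∞} (hk : Measurable (Function.uncurry k)) {A B : ℝ≥0∞}
    (hA : ∀ᵐ x ∂μ, ∫⁻ y, k x y ∂ν ≤ A) (hB : ∀ᵐ y ∂ν, ∫⁻ x, k x y ∂μ ≤ B)
    {g : Y → E} (hg : AEStronglyMeasurable g ν) {h : X → F}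
    (hh : ∀ᵐ x ∂μ, ‖h x‖ₑ ≤ ∫⁻ y, k x y * ‖g y‖ₑ ∂ν) {p : ℝ≥0∞} (hp : 1 ≤ p) :
    eLpNorm h p μ ≤ A ^ (1 - 1 / p.toReal) * B ^ (1 / p.toReal) * eLpNorm g p ν := by
  rcases eq_or_ne p ∞ with rfl | hp_top
  · suffices eLpNormEssSup h μ ≤ A * eLpNormEssSup g ν by simpa using this
    refine essSup_le_of_ae_le _ ?_
    filter_upwards [hA, hh] with x hAx hhx
    have hkx : AEMeasurable (k x) ν := hk.of_uncurry_left.aemeasurable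
    calc ‖h x‖ₑ ≤ ∫⁻ y, k x y * ‖g y‖ₑ ∂ν := hhx
      _ ≤ (∫⁻ y, k x y ∂ν) * eLpNormEssSup g (ν.withDensity (k x)) := by
          simpa using lintegral_mul_enorm_le_rpow_mul_eLpNorm_withDensity hkx hg hp
      _ ≤ A * eLpNormEssSup g ν :=
          mul_le_mul' hAx (eLpNormEssSup_mono_measure g (withDensity_absolutelyContinuous ν (k x)))
  · have hp_one : 1 ≤ p.toReal := by simpa using ENNReal.toReal_mono hp_top hp
    have hp_pos : 0 < p.toReal := one_pos.trans_le hp_one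
    have hp_zero : p ≠ 0 := (one_pos.trans_le hp).ne'
    rw [eLpNorm_eq_lintegral_rpow_enorm_toReal hp_zero hp_top,
      eLpNorm_eq_lintegral_rpow_enorm_toReal hp_zero hp_top]
    have hpow : ∫⁻ x, ‖h x‖ₑ ^ p.toReal ∂μ ≤
        A ^ (p.toReal - 1) * (B * ∫⁻ y, ‖g y‖ₑ ^ p.toReal ∂ν) :=
      (lintegral_mono_ae (hh.mono fun x hx => ENNReal.rpow_le_rpow hx hp_pos.le)).trans
        (lintegral_lintegral_mul_rpow_le hk hA hB hg hp_one)
    refine (ENNReal.rpow_le_rpow hpow (by positivity)).trans_eq ?_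
    rw [ENNReal.mul_rpow_of_nonneg _ _ (by positivity),
      ENNReal.mul_rpow_of_nonneg _ _ (by positivity), ← ENNReal.rpow_mul, ← mul_assoc, sub_mul,
      mul_one_div_cancel hp_pos.ne', one_mul]

end SchurTest

section Periodic

variable {g : ℝ → ℝ≥0∞} {T : ℝ}

lemma setLIntegral_comp_sub_of_periodic (hg : Function.Periodic g T) (hT : 0 < T) (a c : ℝ) :
    ∫⁻ t in Set.Ioc a (a + T), g (t - c) = ∫⁻ t in Set.Ioc a (a + T), g t := by
  have : VAddInvariantMeasure (AddSubgroup.zmultiples T) ℝ volume :=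
    ⟨fun c s _ => measure_preimage_add _ _ _⟩
  have hshift : (fun t => t - c) ⁻¹' Set.Ioc (a - c) (a - c + T) = Set.Ioc a (a + T) := by
    rw [Set.preimage_sub_const_Ioc]
    congr 1 <;> ring
  rw [← hshift, (measurePreserving_sub_right volume c).setLIntegral_comp_preimage_emb
      (MeasurableEquiv.subRight c).measurableEmbedding, hshift]
  exact (isAddFundamentalDomain_Ioc hT (a - c)).setLIntegral_eq (isAddFundamentalDomain_Ioc hT a) g
    hg.map_vadd_zmultiples

lemma measure_univ_mul_setLIntegral_le_of_periodic {Y : Type*} [MeasurableSpace Y]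
    {ν : Measure Y} [SFinite ν] (hg : Function.Periodic g T) (hgm : Measurable g) (hT : 0 < T)
    {s : Y → ℝ} (hs : Measurable s) {B : ℝ≥0∞} (hB : ∀ t, ∫⁻ y, g (t - s y) ∂ν ≤ B) (a : ℝ) :
    ν Set.univ * ∫⁻ t in Set.Ioc a (a + T), g t ≤ ENNReal.ofReal T * B := by
  have hmeas : Measurable (Function.uncurry fun y t => g (t - s y)) := by
    unfold Function.uncurry
    fun_prop
  calc ν Set.univ * ∫⁻ t in Set.Ioc a (a + T), g t
      = ∫⁻ y, (∫⁻ t in Set.Ioc a (a + T), g (t - s y)) ∂ν := by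
        simp_rw [setLIntegral_comp_sub_of_periodic hg hT, lintegral_const, mul_comm]
    _ = ∫⁻ t in Set.Ioc a (a + T), ∫⁻ y, g (t - s y) ∂ν :=
        lintegral_lintegral_swap hmeas.aemeasurable
    _ ≤ ∫⁻ _ in Set.Ioc a (a + T), B := lintegral_mono hB
    _ = ENNReal.ofReal T * B := by
        rw [setLIntegral_const, Real.volume_Ioc, add_sub_cancel_left, mul_comm]

end Periodic

section Grid

/-- The normalised counting measure `ε Σ_v δ_v` on the one-dimensional periodic grid; its total
mass is `2`, the length of `[-1,1]`. -/
def gridMeasure (N : ℕ) : Measure (ZMod (2 * N)) := (N : ℝ≥0∞)⁻¹ • Measure.count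

/-- The point `ε v ∈ [-1,1]` corresponding to `v ∈ ℤ/2Nℤ`. -/
def gridPt (N : ℕ) (v : ZMod (2 * N)) : ℝ := (latRep N v : ℝ) / N

variable (N : ℕ)

lemma gridMeasure_singleton (v : ZMod (2 * N)) : gridMeasure N {v} = (N : ℝ≥0∞)⁻¹ := by
  simp [gridMeasure]

variable [NeZero N]

instance : IsFiniteMeasure (gridMeasure N) := by
  unfold gridMeasure
  have : (N : ℝ≥0∞)⁻¹ ≠ ∞ := by simp [NeZero.ne N]
  exact Measure.smul_finite _ this

lemma gridMeasure_univ : gridMeasure N Set.univ = 2 := by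
  have hN : (N : ℝ≥0∞) ≠ 0 := by simp [NeZero.ne N]
  rw [gridMeasure, Measure.smul_apply, Measure.count_univ, ENat.card_eq_coe_fintype_card,
    ZMod.card, smul_eq_mul]
  push_cast
  rw [mul_left_comm, ENNReal.inv_mul_cancel hN (by simp), mul_one]

lemma lintegral_gridMeasure (g : ZMod (2 * N) → ℝ≥0∞) :
    ∫⁻ v, g v ∂gridMeasure N = (N : ℝ≥0∞)⁻¹ * ∑ v, g v := by
  simp [lintegral_fintype, gridMeasure_singleton, Finset.mul_sum, mul_comm]

lemma latRep_eq_valMinAbs (v : ZMod (2 * N)) : latRep N v = v.valMinAbs := by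
  rw [ZMod.valMinAbs_def_pos, latRep]
  split_ifs <;> omega

lemma latRep_eq_iff (v : ZMod (2 * N)) (n : ℤ) :
    latRep N v = n ↔ v = n ∧ n ∈ Set.Ioc (-N : ℤ) N := by
  rw [latRep_eq_valMinAbs, ZMod.valMinAbs_spec]
  simp only [Set.mem_Ioc]
  push_cast
  constructor <;> rintro ⟨h, h1, h2⟩ <;> exact ⟨h, by omega, by omega⟩

lemma sum_latRep {M : Type*} [AddCommMonoid M] (F : ℤ → M) :
    ∑ v : ZMod (2 * N), F (latRep N v) = ∑ n ∈ Finset.Ioc (-N : ℤ) N, F n := by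
  refine Finset.sum_bij' (fun v _ => latRep N v) (fun n _ => (n : ZMod (2 * N))) ?_ ?_ ?_ ?_ ?_
  · intro v _
    exact Finset.mem_Ioc.2 ((latRep_eq_iff N v _).1 rfl).2
  · intro n _
    exact Finset.mem_univ _
  · intro v _
    exact ((latRep_eq_iff N v _).1 rfl).1.symm
  · intro n hn
    exact (latRep_eq_iff N _ n).2 ⟨rfl, Finset.mem_Ioc.1 hn⟩
  · intro v _
    rfl

lemma sum_Ioc_neg_natCast {M : Type*} [AddCommMonoid M] (F : ℤ → M) (n : ℕ) :
    ∑ j ∈ Finset.Ioc (-n : ℤ) n, F j = ∑ k ∈ Finset.range n, (F (-k) + F (k + 1)) := by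
  induction n with
  | zero => simp
  | succ n ih =>
    rw [Finset.sum_range_succ, ← ih, Nat.cast_succ, Finset.Ioc_succ_succ,
      Finset.sum_union (by simp), Finset.sum_pair (by lia)]

lemma sum_latRep_add_of_periodic {M : Type*} [AddCommMonoid M] {F : ℤ → M}
    (hF : Function.Periodic F (2 * N)) (m : ℤ) :
    ∑ v : ZMod (2 * N), F (latRep N v + m) = ∑ v : ZMod (2 * N), F (latRep N v) := by
  have hF_latRep (n : ℤ) : F n = F (latRep N n) := by
    have hcast : ((latRep N n : ℤ) : ZMod (2 * N)) = n := ((latRep_eq_iff N n _).1 rfl).1.symm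
    obtain ⟨j, hj⟩ := (ZMod.intCast_eq_intCast_iff_dvd_sub _ _ _).1 hcast
    have hn : n = latRep N n + j * (2 * N) := by
      push_cast at hj
      linear_combination hj
    conv_lhs => rw [hn]
    exact hF.int_mul j _
  calc ∑ v : ZMod (2 * N), F (latRep N v + m) = ∑ v : ZMod (2 * N), F (latRep N (v + m)) := by
        refine Finset.sum_congr rfl fun v _ => ?_
        rw [hF_latRep, Int.cast_add, ← ((latRep_eq_iff N v _).1 rfl).1]
    _ = ∑ v : ZMod (2 * N), F (latRep N v) :=
        Equiv.sum_comp (Equiv.addRight (m : ZMod (2 * N))) fun v => F (latRep N v)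

lemma sum_sub_gridPt_of_periodic {M : Type*} [AddCommMonoid M] {g : ℝ → M}
    (hg : Function.Periodic g 2) (t : ℝ) :
    ∑ v : ZMod (2 * N), g (t - gridPt N v) = ∑ k ∈ Finset.range N,
      (g ((Int.fract (N * t) + k) / N) + g ((Int.fract (N * t) - (k + 1)) / N)) := by
  have hN : (N : ℝ) ≠ 0 := NeZero.ne _
  set F : ℤ → M := fun n => g (t - n / N) with hF
  have hper : Function.Periodic F (2 * N) := fun n => by
    have hshift : t - (n + 2 * N : ℤ) / N = t - n / N - 2 := by
      push_cast
      field_simp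
      ring
    simp only [hF, hshift, hg.sub_eq]
  calc ∑ v : ZMod (2 * N), g (t - gridPt N v) = ∑ v : ZMod (2 * N), F (latRep N v + ⌊N * t⌋) :=
        (sum_latRep_add_of_periodic N hper _).symm
    _ = ∑ k ∈ Finset.range N, (F (-k + ⌊N * t⌋) + F (k + 1 + ⌊N * t⌋)) := by
        rw [sum_latRep N fun n => F (n + ⌊N * t⌋), sum_Ioc_neg_natCast]
    _ = _ := by
        refine Finset.sum_congr rfl fun k _ => ?_
        simp only [hF, Int.fract]
        congr 2 <;> (push_cast; field_simp; ring)

end Grid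

section DirichletKernel

/-- The one-dimensional Dirichlet kernel `½ Σ_{1-N ≤ n ≤ N} e^{iπnt}` of the frequency set
`{1-N, …, N}`. -/
def dirichletKernel (N : ℕ) (t : ℝ) : ℂ :=
  1 / 2 * ∑ n ∈ Finset.Ioc (-N : ℤ) N, Complex.exp (Real.pi * Complex.I * (n * t))

variable (N : ℕ)

@[fun_prop]
lemma continuous_dirichletKernel : Continuous (dirichletKernel N) := by
  unfold dirichletKernel
  fun_prop

lemma dirichletKernel_periodic : Function.Periodic (dirichletKernel N) 2 := fun t => by
  unfold dirichletKernel
  congr 1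
  refine Finset.sum_congr rfl fun n _ => ?_
  rw [Complex.exp_eq_exp_iff_exists_int]
  exact ⟨n, by push_cast; ring⟩

lemma norm_exp_pi_mul_I_mul (n : ℤ) (t : ℝ) :
    ‖Complex.exp (Real.pi * Complex.I * (n * t))‖ = 1 := by
  rw [← Complex.norm_exp_ofReal_mul_I (Real.pi * (n * t))]
  push_cast
  congr 2
  ring

lemma norm_dirichletKernel_le (t : ℝ) : ‖dirichletKernel N t‖ ≤ N := by
  have hsum : ‖∑ n ∈ Finset.Ioc (-N : ℤ) N, Complex.exp (Real.pi * Complex.I * (n * t))‖ ≤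
      2 * N := by
    have hcard : (Finset.Ioc (-N : ℤ) N).card = 2 * N := by
      rw [Int.card_Ioc]
      omega
    refine (norm_sum_le _ _).trans_eq ?_
    simp [norm_exp_pi_mul_I_mul, hcard]
  have hhalf : ‖(1 / 2 : ℂ)‖ = 1 / 2 := by norm_num
  rw [dirichletKernel, norm_mul, hhalf]
  linarith

lemma dirichletKernel_mul_exp_sub_one (t : ℝ) :
    dirichletKernel N t * (Complex.exp (Real.pi * Complex.I * t) - 1) =
      1 / 2 * (Complex.exp (Real.pi * Complex.I * ((N + 1 : ℤ) * t)) -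
        Complex.exp (Real.pi * Complex.I * ((1 - N : ℤ) * t))) := by
  set e : ℤ → ℂ := fun n => Complex.exp (Real.pi * Complex.I * (n * t)) with he
  have he_mul (n : ℤ) : e n * Complex.exp (Real.pi * Complex.I * t) = e (n + 1) := by
    rw [he, ← Complex.exp_add]
    push_cast
    congr 1
    ring
  have htelescope (k : ℕ) : (e (-k) + e (k + 1)) * (Complex.exp (Real.pi * Complex.I * t) - 1) =
      (e ((k + 1 : ℕ) + 1) - e (1 - (k + 1 : ℕ))) - (e (k + 1) - e (1 - k)) := by
    rw [mul_sub_one, add_mul, he_mul, he_mul]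
    push_cast
    ring_nf
  rw [dirichletKernel, sum_Ioc_neg_natCast, mul_assoc, Finset.sum_mul,
    Finset.sum_congr rfl fun k _ => htelescope k,
    Finset.sum_range_sub fun k : ℕ => e (k + 1) - e (1 - k)]
  simp [he]

lemma norm_dirichletKernel_mul_abs_sin_le (t : ℝ) :
    ‖dirichletKernel N t‖ * |Real.sin (Real.pi * t / 2)| ≤ 1 / 2 := by
  have hclosed := congrArg norm (dirichletKernel_mul_exp_sub_one N t)
  have hchord : ‖Complex.exp (Real.pi * Complex.I * t) - 1‖ =
      2 * |Real.sin (Real.pi * t / 2)| := by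
    have := Complex.norm_exp_I_mul_ofReal_sub_one (Real.pi * t)
    rw [Real.norm_eq_abs, abs_mul, abs_two] at this
    rw [← this]
    push_cast
    congr 3
    ring
  have hnum := norm_sub_le (Complex.exp (Real.pi * Complex.I * ((N + 1 : ℤ) * t)))
    (Complex.exp (Real.pi * Complex.I * ((1 - N : ℤ) * t)))
  rw [norm_exp_pi_mul_I_mul, norm_exp_pi_mul_I_mul] at hnum
  have hhalf : ‖(1 / 2 : ℂ)‖ = 1 / 2 := by norm_num
  rw [norm_mul, norm_mul, hchord, hhalf] at hclosed
  linarith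

lemma abs_le_abs_sin_pi_mul_div_two {t : ℝ} (ht : |t| ≤ 1) :
    |t| ≤ |Real.sin (Real.pi * t / 2)| := by
  have := Real.mul_abs_le_abs_sin (x := Real.pi * t / 2) (by
    rw [abs_div, abs_mul, abs_of_pos Real.pi_pos, abs_two]
    nlinarith [Real.pi_pos])
  refine le_trans (le_of_eq ?_) this
  rw [abs_div, abs_mul, abs_of_pos Real.pi_pos, abs_two]
  field_simp

lemma norm_dirichletKernel_mul_le {t : ℝ} (ht : |t| ≤ 1) :
    ‖dirichletKernel N t‖ * (1 + N * |t|) ≤ 3 / 2 * N := by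
  have hsin := mul_le_mul_of_nonneg_left (abs_le_abs_sin_pi_mul_div_two ht)
    (norm_nonneg (dirichletKernel N t))
  have hdecay : ‖dirichletKernel N t‖ * |t| ≤ 1 / 2 :=
    hsin.trans (norm_dirichletKernel_mul_abs_sin_le N t)
  have hsup := norm_dirichletKernel_le N t
  nlinarith [N.cast_nonneg (α := ℝ)]

lemma norm_dirichletKernel_div_le_inv {s : ℝ} {k : ℕ} (hks : k ≤ |s|) (hs : |s| ≤ N) :
    ‖dirichletKernel N (s / N)‖ ≤ 3 / 2 * N * ((k : ℝ) + 1)⁻¹ := by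
  rcases N.eq_zero_or_pos with rfl | hN
  · simp [dirichletKernel]
  have hN' : 0 < (N : ℝ) := Nat.cast_pos.2 hN
  have habs : |s / N| = |s| / N := by rw [abs_div, abs_of_pos hN']
  have hdecay := norm_dirichletKernel_mul_le N (habs.trans_le ((div_le_one hN').2 hs))
  rw [habs, mul_div_cancel₀ _ hN'.ne'] at hdecay
  rw [← div_eq_mul_inv, le_div_iff₀ (by positivity)]
  exact (mul_le_mul_of_nonneg_left (by linarith) (norm_nonneg _)).trans hdecay

lemma sum_norm_dirichletKernel_sub_gridPt_le [NeZero N] (t : ℝ) :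
    ∑ v : ZMod (2 * N), ‖dirichletKernel N (t - gridPt N v)‖ ≤ N * (3 * (1 + Real.log N)) := by
  have hfract_nonneg := Int.fract_nonneg (N * t)
  have hfract_lt := Int.fract_lt_one (N * t)
  have hright {k : ℕ} (hk : (k : ℝ) + 1 ≤ N) :
      ‖dirichletKernel N ((Int.fract (N * t) + k) / N)‖ ≤ 3 / 2 * N * ((k : ℝ) + 1)⁻¹ := by
    apply norm_dirichletKernel_div_le_inv <;>
      rw [abs_of_nonneg (by positivity)] <;> linarith
  have hleft {k : ℕ} (hk : (k : ℝ) + 1 ≤ N) :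
      ‖dirichletKernel N ((Int.fract (N * t) - (k + 1)) / N)‖ ≤ 3 / 2 * N * ((k : ℝ) + 1)⁻¹ := by
    have : (0 : ℝ) ≤ k := k.cast_nonneg
    apply norm_dirichletKernel_div_le_inv <;>
      rw [abs_of_nonpos (by linarith)] <;> linarith
  have hharmonic : ∑ k ∈ Finset.range N, ((k : ℝ) + 1)⁻¹ ≤ 1 + Real.log N := by
    simpa [harmonic] using harmonic_le_one_add_log N
  calc ∑ v : ZMod (2 * N), ‖dirichletKernel N (t - gridPt N v)‖
      = ∑ k ∈ Finset.range N, (‖dirichletKernel N ((Int.fract (N * t) + k) / N)‖ +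
          ‖dirichletKernel N ((Int.fract (N * t) - (k + 1)) / N)‖) :=
        sum_sub_gridPt_of_periodic N ((dirichletKernel_periodic N).comp norm) t
    _ ≤ ∑ k ∈ Finset.range N, 3 * N * ((k : ℝ) + 1)⁻¹ := by
        refine Finset.sum_le_sum fun k hk => ?_
        have hk' : (k : ℝ) + 1 ≤ N := by exact_mod_cast Finset.mem_range.1 hk
        linarith [hright hk', hleft hk']
    _ ≤ N * (3 * (1 + Real.log N)) := by
        rw [← Finset.mul_sum]
        linarith [mul_le_mul_of_nonneg_left hharmonic N.cast_nonneg]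

lemma lintegral_enorm_dirichletKernel_sub_gridPt_le [NeZero N] (t : ℝ) :
    ∫⁻ v, ‖dirichletKernel N (t - gridPt N v)‖ₑ ∂gridMeasure N ≤
      ENNReal.ofReal (3 * (1 + Real.log N)) := by
  have hN : 0 < (N : ℝ) := Nat.cast_pos.2 (NeZero.pos N)
  have hsum := ENNReal.ofReal_le_ofReal (sum_norm_dirichletKernel_sub_gridPt_le N t)
  rw [ENNReal.ofReal_sum_of_nonneg fun _ _ => norm_nonneg _, ENNReal.ofReal_mul hN.le,
    ENNReal.ofReal_natCast] at hsum
  simp only [ofReal_norm] at hsum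
  rw [lintegral_gridMeasure]
  calc _ ≤ (N : ℝ≥0∞)⁻¹ * (N * ENNReal.ofReal (3 * (1 + Real.log N))) := by gcongr
    _ = ENNReal.ofReal (3 * (1 + Real.log N)) := by
        rw [← mul_assoc, ENNReal.inv_mul_cancel (by simp [NeZero.ne N]) (by simp), one_mul]

lemma lintegral_enorm_dirichletKernel_sub_le [NeZero N] (a : ℝ) :
    ∫⁻ t in Set.Icc (-1 : ℝ) 1, ‖dirichletKernel N (t - a)‖ₑ ≤
      ENNReal.ofReal (3 * (1 + Real.log N)) := by
  have hper : Function.Periodic (fun t => ‖dirichletKernel N t‖ₑ) 2 :=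
    (dirichletKernel_periodic N).comp enorm
  have hmean := measure_univ_mul_setLIntegral_le_of_periodic hper
    (continuous_dirichletKernel N).enorm.measurable two_pos (measurable_of_finite (gridPt N))
    (lintegral_enorm_dirichletKernel_sub_gridPt_le N) (-1)
  rw [gridMeasure_univ, ENNReal.ofReal_ofNat, ← setLIntegral_comp_sub_of_periodic hper two_pos _ a,
    ENNReal.mul_le_mul_iff_right two_ne_zero ENNReal.ofNat_ne_top] at hmean
  rw [show (-1 : ℝ) + 2 = 1 by norm_num] at hmean
  rwa [← restrict_Ioc_eq_restrict_Icc]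

end DirichletKernel

section Lattice

/-- The normalised counting measure `ε² Σ_{x ∈ Λ_ε} δ_x`, whose `L^p` norms are those of `Λ_ε`. -/
def latMeasure (N : ℕ) : Measure (Lat N) := (gridMeasure N).prod (gridMeasure N)

variable (N : ℕ) [NeZero N]

instance : IsFiniteMeasure (latMeasure N) :=
  inferInstanceAs (IsFiniteMeasure ((gridMeasure N).prod (gridMeasure N)))

lemma latMeasure_singleton (z : Lat N) :
    latMeasure N {z} = ENNReal.ofReal ((N : ℝ) ^ 2)⁻¹ := by
  have hN : 0 < (N : ℝ) := Nat.cast_pos.2 (NeZero.pos N)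
  rw [latMeasure, ← Set.singleton_prod_singleton, Measure.prod_prod, gridMeasure_singleton,
    gridMeasure_singleton, ← sq, ← inv_pow, ENNReal.ofReal_pow (by positivity),
    ENNReal.ofReal_inv_of_pos hN, ENNReal.ofReal_natCast]

lemma eLpNorm_latMeasure {E : Type*} [NormedAddCommGroup E] {p : ℝ≥0∞} (hp : p ≠ 0)
    (f : Lat N → E) : eLpNorm f p (latMeasure N) = ENNReal.ofReal (dLp N p f) := by
  have hN : 0 < (N : ℝ) := Nat.cast_pos.2 (NeZero.pos N)
  have hmass (z : Lat N) : latMeasure N {z} ≠ 0 := by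
    rw [latMeasure_singleton]
    positivity
  rcases eq_or_ne p ∞ with rfl | hp_top
  · rw [dLp, if_pos rfl, eLpNorm_exponent_top, eLpNormEssSup_eq_iSup hmass,
      ENNReal.ofReal_mono.map_ciSup_of_continuousAt ENNReal.continuous_ofReal.continuousAt
        (Set.finite_range _).bddAbove]
    simp only [ofReal_norm]
  · have hp_pos : 0 < p.toReal := ENNReal.toReal_pos hp hp_top
    rw [dLp, if_neg hp_top, eLpNorm_eq_lintegral_rpow_enorm_toReal hp hp_top, lintegral_fintype,
      ← ENNReal.ofReal_rpow_of_nonneg (by positivity) (by positivity),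
      ENNReal.ofReal_sum_of_nonneg fun _ _ => by positivity]
    congr 1
    refine Finset.sum_congr rfl fun z _ => ?_
    rw [latMeasure_singleton, ENNReal.ofReal_mul (by positivity), mul_comm,
      ← ENNReal.ofReal_rpow_of_nonneg (norm_nonneg _) hp_pos.le, ofReal_norm]

lemma dLp_nonneg (p : ℝ≥0∞) {E : Type*} [NormedAddCommGroup E] (f : Lat N → E) :
    0 ≤ dLp N p f := by
  unfold dLp
  split_ifs
  · exact Real.iSup_nonneg fun z => norm_nonneg _
  · positivity

lemma dLp_ofReal (p : ℝ≥0∞) (f : Lat N → ℝ) : dLp N p (fun z => (f z : ℂ)) = dLp N p f := by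
  simp only [dLp, Complex.norm_real]

end Lattice

section Extension

lemma eW_sub (w : ℤ × ℤ) (x y : ℝ × ℝ) : eW w (x - y) = starRingEnd ℂ (eW w y) * eW w x := by
  rw [eW, eW, eW, ← Complex.exp_conj, ← Complex.exp_add]
  congr 1
  simp only [map_mul, map_add, Complex.conj_I, Complex.conj_ofReal, map_intCast, Prod.fst_sub,
    Prod.snd_sub, Complex.ofReal_sub]
  ring

/-- The convolution kernel `(s, t) ↦ D_N(s) D_N(t)` of the extension operator `Ex`. -/
def extKernel (N : ℕ) (x : ℝ × ℝ) : ℂ := dirichletKernel N x.1 * dirichletKernel N x.2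

variable (N : ℕ) [NeZero N]

lemma extKernel_eq_sum_eW (x : ℝ × ℝ) :
    extKernel N x = 1 / 4 * ∑ w : Lat N, eW (latRep2 N w) x := by
  have hexp (w : Lat N) : eW (latRep2 N w) x =
      Complex.exp (Real.pi * Complex.I * (latRep N w.1 * x.1)) *
        Complex.exp (Real.pi * Complex.I * (latRep N w.2 * x.2)) := by
    rw [eW, latRep2, mul_add, Complex.exp_add]
  simp_rw [hexp, Fintype.sum_prod_type, ← Fintype.sum_mul_sum]
  rw [extKernel, dirichletKernel, dirichletKernel, ← sum_latRep, ← sum_latRep]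
  ring

lemma Ex_eq_sum_extKernel (f : Lat N → ℂ) (x : ℝ × ℝ) :
    Ex N f x = ∑ z : Lat N, ((N : ℂ) ^ 2)⁻¹ * f z * extKernel N (x - latPt N z) := by
  simp_rw [Ex, dFT, extKernel_eq_sum_eW, eW_sub, Finset.sum_mul]
  rw [Finset.sum_comm, Finset.mul_sum]
  refine Finset.sum_congr rfl fun z _ => ?_
  rw [mul_left_comm _ (1 / 4 : ℂ), Finset.mul_sum (a := ((N : ℂ) ^ 2)⁻¹ * f z)]
  simp only [mul_assoc]

lemma enorm_Ex_le_lintegral (f : Lat N → ℂ) (x : ℝ × ℝ) :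
    ‖Ex N f x‖ₑ ≤ ∫⁻ z, ‖extKernel N (x - latPt N z)‖ₑ * ‖f z‖ₑ ∂latMeasure N := by
  have hmass (z : Lat N) : latMeasure N {z} = ‖((N : ℂ) ^ 2)⁻¹‖ₑ := by
    rw [latMeasure_singleton, ← ofReal_norm]
    simp
  rw [Ex_eq_sum_extKernel, lintegral_fintype]
  refine (enorm_sum_le _ _).trans_eq (Finset.sum_congr rfl fun z _ => ?_)
  rw [enorm_mul, enorm_mul, hmass]
  ring

lemma measurable_extKernel_sub_latPt :
    Measurable (Function.uncurry fun x z => ‖extKernel N (x - latPt N z)‖ₑ) := by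
  have hlatPt : Measurable (latPt N) := measurable_of_finite _
  have hextKernel : Measurable (extKernel N) := by
    unfold extKernel
    fun_prop
  exact (hextKernel.comp (measurable_fst.sub (hlatPt.comp measurable_snd))).enorm

lemma lintegral_enorm_extKernel_latMeasure_le (x : ℝ × ℝ) :
    ∫⁻ z, ‖extKernel N (x - latPt N z)‖ₑ ∂latMeasure N ≤
      ENNReal.ofReal (3 * (1 + Real.log N)) ^ 2 := by
  have hprod (z : Lat N) : ‖extKernel N (x - latPt N z)‖ₑ =
      ‖dirichletKernel N (x.1 - gridPt N z.1)‖ₑ * ‖dirichletKernel N (x.2 - gridPt N z.2)‖ₑ :=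
    enorm_mul _ _
  simp_rw [hprod, latMeasure]
  rw [lintegral_prod_mul (f := fun v => ‖dirichletKernel N (x.1 - gridPt N v)‖ₑ)
    (g := fun v => ‖dirichletKernel N (x.2 - gridPt N v)‖ₑ)
    (measurable_of_finite _).aemeasurable (measurable_of_finite _).aemeasurable, sq]
  exact mul_le_mul' (lintegral_enorm_dirichletKernel_sub_gridPt_le N x.1)
    (lintegral_enorm_dirichletKernel_sub_gridPt_le N x.2)

lemma lintegral_enorm_extKernel_box_le (y : ℝ × ℝ) :
    ∫⁻ x in box, ‖extKernel N (x - y)‖ₑ ≤ ENNReal.ofReal (3 * (1 + Real.log N)) ^ 2 := by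
  have hmeas (a : ℝ) : Measurable fun t => ‖dirichletKernel N (t - a)‖ₑ :=
    ((continuous_dirichletKernel N).comp (continuous_sub_right a)).enorm.measurable
  have hprod (x : ℝ × ℝ) : ‖extKernel N (x - y)‖ₑ =
      ‖dirichletKernel N (x.1 - y.1)‖ₑ * ‖dirichletKernel N (x.2 - y.2)‖ₑ :=
    enorm_mul _ _
  simp_rw [hprod]
  rw [box, Measure.volume_eq_prod, ← Measure.prod_restrict,
    lintegral_prod_mul (hmeas y.1).aemeasurable (hmeas y.2).aemeasurable, sq]
  exact mul_le_mul' (lintegral_enorm_dirichletKernel_sub_le N y.1)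
    (lintegral_enorm_dirichletKernel_sub_le N y.2)

end Extension

lemma three_mul_one_add_log_le {x : ℝ} (hx : 2 ≤ x) : 3 * (1 + Real.log x) ≤ 8 * Real.log x := by
  have hlog := Real.log_le_log two_pos hx
  linarith [Real.log_two_gt_d9]

theorem statement6_general (p : ℝ≥0∞) (hp : 1 ≤ p) (N : ℕ) [NeZero N] (f : Lat N → ℂ) :
    cLp p (Ex N f) ≤ ENNReal.ofReal ((3 * (1 + Real.log N)) ^ 2 * dLp N p f) := by
  set A := ENNReal.ofReal (3 * (1 + Real.log N)) ^ 2 with hA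
  have hexponent : 1 / p.toReal ≤ 1 := by
    rcases eq_or_ne p ∞ with rfl | hp_top
    · simp
    · exact div_le_one_of_le₀ (by simpa using ENNReal.toReal_mono hp_top hp) (by positivity)
  have schur := eLpNorm_le_of_enorm_le_lintegral_kernel (μ := volume.restrict box)
    (measurable_extKernel_sub_latPt N)
    (ae_of_all _ (lintegral_enorm_extKernel_latMeasure_le N))
    (ae_of_all _ fun z => lintegral_enorm_extKernel_box_le N (latPt N z))
    (measurable_of_finite f).aestronglyMeasurable (ae_of_all _ (enorm_Ex_le_lintegral N f)) hp
  rw [← hA, ← ENNReal.rpow_add_of_nonneg _ _ (by linarith) (by positivity), sub_add_cancel,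
    ENNReal.rpow_one, eLpNorm_latMeasure N (one_pos.trans_le hp).ne'] at schur
  rwa [cLp, ENNReal.ofReal_mul (by positivity), ENNReal.ofReal_pow (by positivity)]

/-- `‖Ex f‖_{L^p(𝕋²)} ≤ C log²(ε^{-1}) ‖f‖_{L^p(Λ_ε)}`. -/
theorem statement6 (p : ℝ≥0∞) (hp : 1 ≤ p) :
    ∃ C : ℝ, 0 < C ∧ ∀ (N : ℕ) [NeZero N], 2 ≤ N → ∀ f : Lat N → ℝ,
      cLp p (Ex N (fun z => ((f z : ℝ) : ℂ))) ≤
        ENNReal.ofReal (C * (Real.log (N : ℝ))^2 * dLp N p f) := by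
  refine ⟨8 ^ 2, by norm_num, fun N _ hN f => (statement6_general p hp N _).trans ?_⟩
  rw [dLp_ofReal, ← mul_pow]
  have hlog := three_mul_one_add_log_le (x := N) (by exact_mod_cast hN)
  exact ENNReal.ofReal_le_ofReal (mul_le_mul_of_nonneg_right
    (pow_le_pow_left₀ (by positivity) hlog 2) (dLp_nonneg N p f))

end IsingKac
end
end
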